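/- Fix n ≥ 1 and dimensions n_j, m, r_1, …, r_n. For i = 1, …, n let H_i : [0,∞) → ℝ^{n_j×n_j} be continuously differentiable with H_i(t) symmetric and H_i'(t) = C_i(t) + C_i(t)ᵀ for a continuous C_i, let K_{D_i}, P_i ∈ be symmetric positive definite, let K ∈ ℝ^{m×m} be symmetric positive definite, let Y_i : [0,∞) → ℝ^{n_j×m} be continuous, and let W_i : [0,∞) → ℝ^{r_i×m} be continuous. Suppose differentiable s_i and ã_i satisfy H_i(t)ṡ_i(t) + (C_i(t) + K_{D_i})s_i(t) = Y_i(t)ã_i(t) and the composite update ã̇_i(t) = −P_i[Y_i(t)ᵀs_i(t) + W_i(t)ᵀe_i(t) − (K/n)∑_{j=1}^n (ã_j(t) − ã_i(t))] where e_i(t) = W_i(t)ã_i(t). Then V(t) = ∑_{i=1}^n (1/2)(s_i(t)ᵀH_i(t)s_i(t) + ã_i(t)ᵀP_i⁻¹ã_i(t)) is differentiable with V'(t) = −ã(t)ᵀL_K ã(t) − ∑_{i=1}^n (s_i(t)ᵀK_{D_i}s_i(t) + ‖e_i(t)‖²) ≤ 0 for all t ≥ 0, where ã(t) is the stacked error and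 L_K = (I_n − (1/n)𝟙𝟙ᵀ) ⊗ K. -/

import Mathlib

/-!
The proof is the usual Lyapunov computation. For symmetric `M`, a quadratic form `v ⬝ᵥ M v` has
derivative `2 (v ⬝ᵥ M v') + v ⬝ᵥ M' v`. Substituting the dynamics, `H' = C + Cᵀ` cancels the
`C`-terms, and `P⁻¹ P = 1` makes `aᵀ Yᵀ s` from the adaptation law cancel `sᵀ Y a` from the tracking
dynamics (`agent_rate`). What remains of the couplings sums to the block Laplacian form
(`dotProduct_blockLaplacian`). The sign follows because `I − (1/n) 𝟙𝟙ᵀ` is an orthogonal projection,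
so its Kronecker product with `K` is positive semidefinite (`blockLaplacian_posSemidef`).
-/

open Matrix Kronecker MeasureTheory Filter Topology

/-- The block Laplacian `L_K = (I_n − (1/n) 𝟙𝟙ᵀ) ⊗ K` of an all-to-all coupled
network of `n` agents with coupling gain `K`. -/
noncomputable def blockLaplacian (n m : ℕ) (K : Matrix (Fin m) (Fin m) ℝ) :
    Matrix (Fin n × Fin m) (Fin n × Fin m) ℝ :=
  ((1 : Matrix (Fin n) (Fin n) ℝ) - (n : ℝ)⁻¹ • Matrix.of fun _ _ => (1:ℝ)) ⊗ₖ K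

/-- Derivative of a time-varying quadratic form whose matrix is symmetric at the given time. -/
lemma hasDerivWithinAt_quadForm {k : ℕ} {S : Set ℝ} {t : ℝ}
    {M : ℝ → Matrix (Fin k) (Fin k) ℝ} {M' : Matrix (Fin k) (Fin k) ℝ}
    {v : ℝ → Fin k → ℝ} {v' : Fin k → ℝ} (hsymm : (M t).IsSymm)
    (hM : ∀ a b, HasDerivWithinAt (fun τ => M τ a b) (M' a b) S t)
    (hv : HasDerivWithinAt v v' S t) :
    HasDerivWithinAt (fun τ => v τ ⬝ᵥ (M τ *ᵥ v τ))
      (2 * (v t ⬝ᵥ (M t *ᵥ v')) + v t ⬝ᵥ (M' *ᵥ v t)) S t := by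
  have hvc := hasDerivWithinAt_pi.1 hv
  have hswap : v' ⬝ᵥ (M t *ᵥ v t) = v t ⬝ᵥ (M t *ᵥ v') := by
    rw [dotProduct_mulVec, ← mulVec_transpose, hsymm.eq, dotProduct_comm]
  have key : HasDerivWithinAt (fun τ => ∑ a, v τ a * ∑ b, M τ a b * v τ b)
      (∑ a, (v' a * ∑ b, M t a b * v t b +
        v t a * ∑ b, (M' a b * v t b + M t a b * v' b))) S t :=
    HasDerivWithinAt.fun_sum fun a _ =>
      (hvc a).mul (HasDerivWithinAt.fun_sum fun b _ => (hM a b).mul (hvc b))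
  refine key.congr_deriv ?_
  rw [two_mul]
  nth_rewrite 1 [← hswap]
  simp only [dotProduct, mulVec, Finset.sum_add_distrib, mul_add]
  ring

/-- Contribution of one agent to `V'`, where `u` stands for its coupling input `∑ⱼ (ã_j − ã_i)`
and `c` for the coupling weight `1/n`. -/
lemma agent_rate {k m p : ℕ} {H C D : Matrix (Fin k) (Fin k) ℝ} {Y : Matrix (Fin k) (Fin m) ℝ}
    {W : Matrix (Fin p) (Fin m) ℝ} {P K : Matrix (Fin m) (Fin m) ℝ} {s ds : Fin k → ℝ}
    {a u : Fin m → ℝ} {c : ℝ} (hP : P.PosDef)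
    (hdyn : H *ᵥ ds + (C + D) *ᵥ s = Y *ᵥ a) :
    (1/2) * ((2 * (s ⬝ᵥ (H *ᵥ ds)) + s ⬝ᵥ ((C + Cᵀ) *ᵥ s)) +
      2 * (a ⬝ᵥ (P⁻¹ *ᵥ -(P *ᵥ (Yᵀ *ᵥ s + Wᵀ *ᵥ (W *ᵥ a) - c • (K *ᵥ u)))))) =
    c * (a ⬝ᵥ (K *ᵥ u)) - (s ⬝ᵥ (D *ᵥ s) + ∑ l, (W *ᵥ a) l ^ 2) := by
  have hadj : ∀ {q l : ℕ} (B : Matrix (Fin q) (Fin l) ℝ) (x : Fin l → ℝ) (y : Fin q → ℝ),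
      x ⬝ᵥ (Bᵀ *ᵥ y) = y ⬝ᵥ (B *ᵥ x) := fun B x y => by
    rw [mulVec_transpose, dotProduct_comm, dotProduct_mulVec]
  have hinv : P⁻¹ * P = 1 := nonsing_inv_mul P ((isUnit_iff_isUnit_det P).1 hP.isUnit)
  have hW : (W *ᵥ a) ⬝ᵥ (W *ᵥ a) = ∑ l, (W *ᵥ a) l ^ 2 := by simp [dotProduct, sq]
  have h1 := congrArg (fun x => s ⬝ᵥ x) hdyn
  simp only [add_mulVec, dotProduct_add] at h1
  rw [mulVec_neg, mulVec_mulVec, hinv, one_mulVec]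
  simp only [add_mulVec, dotProduct_add, dotProduct_neg, dotProduct_sub, dotProduct_smul,
    smul_eq_mul, hadj, hW]
  linarith

/-- The block Laplacian form is minus the total power of the all-to-all couplings; `n ≥ 1` is needed
because the identity terms of `L_K` arise from `n⁻¹ ∑ⱼ ã_i = ã_i`. -/
lemma dotProduct_blockLaplacian {n m : ℕ} (hn : 1 ≤ n) (K : Matrix (Fin m) (Fin m) ℝ)
    (a : Fin n → Fin m → ℝ) :
    ((fun q : Fin n × Fin m => a q.1 q.2) ⬝ᵥ
      (blockLaplacian n m K *ᵥ fun q : Fin n × Fin m => a q.1 q.2)) =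
    -∑ i, (n : ℝ)⁻¹ * (a i ⬝ᵥ (K *ᵥ ∑ j, (a j - a i))) := by
  have hn0 : (n : ℝ) ≠ 0 := by positivity
  have hrow : ∀ i k, (blockLaplacian n m K *ᵥ fun q : Fin n × Fin m => a q.1 q.2) (i, k) =
      -((n : ℝ)⁻¹ * (K *ᵥ ∑ j, (a j - a i)) k) := by
    intro i k
    simp only [mulVec, dotProduct, blockLaplacian, kroneckerMap_apply, Fintype.sum_prod_type]
    rw [Finset.sum_comm, Finset.mul_sum, ← Finset.sum_neg_distrib]
    refine Finset.sum_congr rfl fun l _ => ?_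
    simp [Matrix.one_apply, sub_mul, Finset.sum_sub_distrib, Finset.sum_apply]
    simp only [← Finset.mul_sum, mul_assoc]
    field_simp
    ring
  simp only [dotProduct, Fintype.sum_prod_type, hrow]
  rw [← Finset.sum_neg_distrib]
  refine Finset.sum_congr rfl fun i _ => ?_
  rw [Finset.mul_sum, ← Finset.sum_neg_distrib]
  exact Finset.sum_congr rfl fun l _ => by ring

lemma blockLaplacian_posSemidef {n m : ℕ} (hn : 1 ≤ n) {K : Matrix (Fin m) (Fin m) ℝ}
    (hK : K.PosDef) : (blockLaplacian n m K).PosSemidef := by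
  have hn0 : (n : ℝ) ≠ 0 := by positivity
  set Q : Matrix (Fin n) (Fin n) ℝ :=
    1 - (n : ℝ)⁻¹ • Matrix.of fun _ _ => (1:ℝ) with hQ
  have hproj : Qᴴ * Q = Q := by
    have hJ : (Matrix.of fun _ _ => (1:ℝ) : Matrix (Fin n) (Fin n) ℝ) *
        (Matrix.of fun _ _ => (1:ℝ)) = (n : ℝ) • Matrix.of fun _ _ => (1:ℝ) := by
      ext i j
      simp [Matrix.mul_apply]
    have hH : Qᴴ = Q := by
      ext i j
      simp [hQ, Matrix.one_apply, eq_comm]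
    rw [hH, hQ]
    simp only [sub_mul, mul_sub, one_mul, mul_one, smul_mul_assoc, mul_smul_comm, hJ, smul_smul,
      inv_mul_cancel₀ hn0, one_smul, mul_one]
    simp
  have hQp : Q.PosSemidef := hproj ▸ posSemidef_conjTranspose_mul_self Q
  exact hQp.kronecker hK.posSemidef

/-- composite adaptive control with decentralized updates.  For `n`
manipulators with error dynamics `H_i ṡ_i + (C_i + K_{D_i}) s_i = Y_i ã_i` and composite
update `ã̇_i = −P_i [Y_iᵀ s_i + W_iᵀ e_i − (K/n) ∑ⱼ (ã_j − ã_i)]` where `e_i = W_i ã_i`,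
the Lyapunov function `V = ∑ᵢ (1/2)(s_iᵀ H_i s_i + ã_iᵀ P_i⁻¹ ã_i)` satisfies
`V' = −ãᵀ L_K ã − ∑ᵢ (s_iᵀ K_{D_i} s_i + ‖e_i‖²) ≤ 0`. -/
theorem composite_lyapunov_derivative (n nj m : ℕ) (hn : 1 ≤ n) (r : Fin n → ℕ)
    (H C : Fin n → ℝ → Matrix (Fin nj) (Fin nj) ℝ)
    (KD : Fin n → Matrix (Fin nj) (Fin nj) ℝ)
    (Y : Fin n → ℝ → Matrix (Fin nj) (Fin m) ℝ)
    (W : (i : Fin n) → ℝ → Matrix (Fin (r i)) (Fin m) ℝ)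
    (Pm : Fin n → Matrix (Fin m) (Fin m) ℝ)
    (K : Matrix (Fin m) (Fin m) ℝ)
    (s ds : Fin n → ℝ → Fin nj → ℝ) (at' : Fin n → ℝ → Fin m → ℝ)
    -- each `H i t` is symmetric, continuously differentiable with `H' = C + Cᵀ`
    (hHsymm : ∀ i t, 0 ≤ t → (H i t).IsSymm)
    (hHd : ∀ i, ∀ t, 0 ≤ t → ∀ a b,
      HasDerivWithinAt (fun τ => H i τ a b) ((C i t + (C i t)ᵀ) a b) (Set.Ici 0) t)
    (hCc : ∀ i a b, ContinuousOn (fun t => C i t a b) (Set.Ici 0))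
    (hYc : ∀ i a b, ContinuousOn (fun t => Y i t a b) (Set.Ici 0))
    (hWc : ∀ i a b, ContinuousOn (fun t => W i t a b) (Set.Ici 0))
    -- the gains are symmetric positive definite
    (hKD : ∀ i, (KD i).PosDef) (hPm : ∀ i, (Pm i).PosDef) (hK : K.PosDef)
    -- closed-loop dynamics and composite decentralized update law, with `e_i = W_i ã_i`
    (hs : ∀ i, ∀ t, 0 ≤ t → HasDerivWithinAt (s i) (ds i t) (Set.Ici 0) t)
    (hdyn : ∀ i, ∀ t, 0 ≤ t →
      H i t *ᵥ ds i t + (C i t + KD i) *ᵥ s i t = Y i t *ᵥ at' i t)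
    (hat : ∀ i, ∀ t, 0 ≤ t →
      HasDerivWithinAt (at' i)
        (-(Pm i *ᵥ ((Y i t)ᵀ *ᵥ s i t + (W i t)ᵀ *ᵥ (W i t *ᵥ at' i t) -
          (n : ℝ)⁻¹ • (K *ᵥ ∑ j, (at' j t - at' i t))))) (Set.Ici 0) t) :
    ∀ t, 0 ≤ t →
      HasDerivWithinAt
        (fun τ => ∑ i, (1/2) * (s i τ ⬝ᵥ (H i τ *ᵥ s i τ) +
          at' i τ ⬝ᵥ ((Pm i)⁻¹ *ᵥ at' i τ)))
        (-((fun q : Fin n × Fin m => at' q.1 t q.2) ⬝ᵥ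
            (blockLaplacian n m K *ᵥ fun q : Fin n × Fin m => at' q.1 t q.2)) -
          ∑ i, (s i t ⬝ᵥ (KD i *ᵥ s i t) + ∑ k, (W i t *ᵥ at' i t) k ^ 2))
        (Set.Ici 0) t ∧
      (-((fun q : Fin n × Fin m => at' q.1 t q.2) ⬝ᵥ
            (blockLaplacian n m K *ᵥ fun q : Fin n × Fin m => at' q.1 t q.2)) -
          ∑ i, (s i t ⬝ᵥ (KD i *ᵥ s i t) + ∑ k, (W i t *ᵥ at' i t) k ^ 2)) ≤ 0 := by
  intro t ht
  constructor
  · have hsum : HasDerivWithinAt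
        (fun τ => ∑ i, (1/2) * (s i τ ⬝ᵥ (H i τ *ᵥ s i τ) +
          at' i τ ⬝ᵥ ((Pm i)⁻¹ *ᵥ at' i τ))) _ (Set.Ici 0) t :=
      HasDerivWithinAt.fun_sum fun i _ =>
        ((hasDerivWithinAt_quadForm (hHsymm i t ht) (hHd i t ht) (hs i t ht)).add
          (hasDerivWithinAt_quadForm (M := fun _ => (Pm i)⁻¹) (M' := 0)
            ((conjTranspose_eq_transpose_of_trivial _).symm.trans (hPm i).inv.isHermitian.eq)
            (fun a b => hasDerivWithinAt_const t (Set.Ici 0) ((Pm i)⁻¹ a b))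
            (hat i t ht))).const_mul (1/2)
    refine hsum.congr_deriv ?_
    rw [dotProduct_blockLaplacian hn K fun i => at' i t, neg_neg, ← Finset.sum_sub_distrib]
    refine Finset.sum_congr rfl fun i _ => ?_
    rw [zero_mulVec, dotProduct_zero, add_zero]
    exact agent_rate (hPm i) (hdyn i t ht)
  · have hL := (blockLaplacian_posSemidef hn hK).dotProduct_mulVec_nonneg
      fun q : Fin n × Fin m => at' q.1 t q.2
    rw [star_trivial] at hL
    have hD : 0 ≤ ∑ i, (s i t ⬝ᵥ (KD i *ᵥ s i t) + ∑ k, (W i t *ᵥ at' i t) k ^ 2) := by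
      refine Finset.sum_nonneg fun i _ => add_nonneg ?_ (Finset.sum_nonneg fun k _ => sq_nonneg _)
      simpa using (hKD i).posSemidef.dotProduct_mulVec_nonneg (s i t)
    linarith
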